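/- Let n ≥ 1, let χ be an irreducible complex character of the symmetric group S_n, and let g ∈ S_n be an element with χ(g) ≠ 0. Then the order of g divides n!/χ(1); equivalently, o(g)·χ(1) divides n! = |S_n|. -/

import Mathlib

namespace SymChar
open Finset

/-- size of centralizer for a cycle type -/
def zz (s : Multiset ℕ) : ℕ := s.prod * ∏ i ∈ s.toFinset, (s.count i).factorial

lemma zz_cons (m : ℕ) (s : Multiset ℕ) :
    zz (m ::ₘ s) = m * (s.count m + 1) * zz s := by
  unfold zz
  have h1 : ∏ i ∈ (m ::ₘ s).toFinset, ((m ::ₘ s).count i).factorial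
      = (s.count m + 1) * ∏ i ∈ s.toFinset, (s.count i).factorial := by
    have e1 : ∏ i ∈ s.toFinset, (s.count i).factorial
        = ∏ i ∈ insert m s.toFinset, (s.count i).factorial := by
      apply prod_subset (subset_insert _ _)
      intro x _ hx
      rw [Multiset.mem_toFinset] at hx
      simp [Multiset.count_eq_zero_of_notMem hx]
    rw [e1, Multiset.toFinset_cons, ← mul_prod_erase _ _ (mem_insert_self m s.toFinset),
      ← mul_prod_erase _ (fun i => (s.count i).factorial) (mem_insert_self m s.toFinset),
      Multiset.count_cons_self, Nat.factorial_succ, mul_assoc]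
    congr 2
    apply prod_congr rfl
    intro x hx
    rw [Multiset.count_cons_of_ne (ne_of_mem_erase hx)]
  rw [h1, Multiset.prod_cons]; ring

lemma zz_add_replicate (s : Multiset ℕ) (hs : 1 ∉ s) (k : ℕ) :
    zz (s + Multiset.replicate k 1) = k.factorial * zz s := by
  induction k with
  | zero => simp
  | succ k ih =>
    rw [Multiset.replicate_succ, Multiset.add_cons, zz_cons, ih, Nat.factorial_succ]
    simp [Multiset.count_eq_zero_of_notMem hs, Multiset.count_replicate_self]
    ring

lemma zz_pos (s : Multiset ℕ) (hs : ∀ i ∈ s, 0 < i) : 0 < zz s := by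
  unfold zz
  have := Multiset.prod_pos hs
  positivity

/-- cycle type including fixed points -/
def ct {n : ℕ} (g : Equiv.Perm (Fin n)) : Multiset ℕ := g.partition.parts

lemma ct_sum {n : ℕ} (g : Equiv.Perm (Fin n)) : (ct g).sum = n := by
  have := g.partition.parts_sum
  simpa [ct] using this

lemma ct_pos {n : ℕ} (g : Equiv.Perm (Fin n)) {i : ℕ} (hi : i ∈ ct g) : 0 < i :=
  g.partition.parts_pos hi

lemma card_ct {n : ℕ} (s : Multiset ℕ) (hs : s.sum = n) (hp : ∀ i ∈ s, 0 < i) :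
    #{g : Equiv.Perm (Fin n) | ct g = s} * zz s = n.factorial := by
  have hsplit : s = s.filter (2 ≤ ·) + Multiset.replicate (s.count 1) 1 := by
    conv_lhs => rw [← Multiset.filter_add_not (2 ≤ ·) s]
    congr 1
    rw [← Multiset.filter_eq']
    apply Multiset.filter_congr
    intro x hx
    have := hp x hx
    omega
  set m := s.filter (2 ≤ ·) with hm
  have hsum : m.sum + s.count 1 = n := by
    rw [← hs]; conv_rhs => rw [hsplit]
    simp
  have h1 : 1 ∉ m := by simp [hm]
  have key := Equiv.Perm.card_of_cycleType_mul_eq (Fin n) m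
  rw [if_pos ⟨by simp; omega, by intro a ha; simp [hm] at ha; exact ha.2⟩] at key
  have hset : ({g : Equiv.Perm (Fin n) | ct g = s} : Finset _) =
      ({g : Equiv.Perm (Fin n) | g.cycleType = m} : Finset _) := by
    ext g
    simp only [mem_filter, mem_univ, true_and]
    constructor
    · intro h
      rw [← Equiv.Perm.filter_parts_partition_eq_cycleType]
      change Multiset.filter _ (ct g) = _
      rw [h]
    · intro h
      unfold ct
      rw [Equiv.Perm.parts_partition, ← Equiv.Perm.sum_cycleType, h, hsplit]
      congr 2
      simp; omega
  rw [hset]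
  conv_lhs => rw [hsplit]
  rw [zz_add_replicate _ h1]
  simp only [Fintype.card_fin] at key
  rw [← key]
  have : n - m.sum = s.count 1 := by omega
  rw [this]; unfold zz; ring

/-- average over S_n, as a sum over partitions -/
noncomputable def ES (n : ℕ) (F : Multiset ℕ → ℚ) : ℚ :=
  ∑ l : n.Partition, F l.parts / zz l.parts

lemma sum_perm (n : ℕ) (F : Multiset ℕ → ℚ) :
    ∑ g : Equiv.Perm (Fin n), F (ct g) = n.factorial * ES n F := by
  classical
  let P : Equiv.Perm (Fin n) → n.Partition := fun g =>
    ⟨ct g, fun hi => ct_pos g hi, ct_sum g⟩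
  rw [← sum_fiberwise (s := univ) (g := P), ES, mul_sum]
  apply sum_congr rfl
  intro l _
  have h2 := card_ct (n := n) l.parts l.parts_sum (fun i hi => l.parts_pos hi)
  have hset : ({g : Equiv.Perm (Fin n) | P g = l} : Finset _) =
      ({g : Equiv.Perm (Fin n) | ct g = l.parts} : Finset _) := by
    ext g
    simp [P, Nat.Partition.ext_iff]
  rw [hset, sum_congr rfl (g := fun _ => F l.parts)]
  · rw [sum_const, nsmul_eq_mul, ← h2]
    have := zz_pos l.parts (fun i hi => l.parts_pos hi)
    push_cast
    field_simp
  · intro x hx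
    simp at hx
    rw [hx]

lemma ES_count (n m : ℕ) (hm : 1 ≤ m) (hmn : m ≤ n) (F : Multiset ℕ → ℚ) :
    m * ES n (fun s => s.count m * F (s.erase m)) = ES (n - m) F := by
  classical
  unfold ES
  rw [mul_sum]
  have h1 : ∑ l : n.Partition, (m:ℚ) * ((l.parts.count m * F (l.parts.erase m)) / zz l.parts)
      = ∑ l : {l : n.Partition // m ∈ l.parts},
        (m:ℚ) * ((l.1.parts.count m * F (l.1.parts.erase m)) / zz l.1.parts) := by
    rw [← sum_filter_add_sum_filter_not univ (fun l : n.Partition => m ∈ l.parts)]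
    rw [sum_eq_zero (s := filter (fun l : n.Partition => ¬ m ∈ l.parts) univ), add_zero]
    · apply sum_bij' (fun x hx => (⟨x, by simpa using hx⟩ : {l : n.Partition // m ∈ l.parts}))
        (fun x _ => x.1) <;> simp
    · intro l hl
      simp at hl
      simp [Multiset.count_eq_zero_of_notMem hl]
  rw [h1]
  apply Fintype.sum_equiv (Nat.Partition.partitionWithPartEquiv hm hmn)
  rintro ⟨l, hl⟩
  simp only [Nat.Partition.partitionWithPartEquiv_apply_parts]
  obtain ⟨t, ht⟩ := Multiset.exists_cons_of_mem hl
  have hz := zz_pos l.parts (fun i hi => l.parts_pos hi)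
  rw [ht] at hz
  rw [ht, Multiset.erase_cons_head, zz_cons, Multiset.count_cons_self]
  rw [zz_cons] at hz
  have : zz t ≠ 0 := by rintro h; simp [h] at hz
  have : (m:ℚ) ≠ 0 := by positivity
  push_cast
  field_simp

lemma ES_rec (n : ℕ) (F : Multiset ℕ → ℚ) :
    n * ES n F = ∑ m ∈ Icc 1 n, ES (n - m) (fun s => F (m ::ₘ s)) := by
  have h1 : ∀ m ∈ Icc 1 n, ES (n - m) (fun s => F (m ::ₘ s)) =
      m * ES n (fun s => s.count m * F s) := by
    intro m hm
    rw [mem_Icc] at hm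
    rw [← ES_count n m hm.1 hm.2]
    congr 2
    ext s
    by_cases h : m ∈ s
    · rw [Multiset.cons_erase h]
    · simp [Multiset.count_eq_zero_of_notMem h]
  rw [sum_congr rfl h1]
  unfold ES
  simp_rw [mul_sum]
  rw [sum_comm]
  apply sum_congr rfl
  intro l _
  have h2 : ∑ m ∈ Icc 1 n, m * l.parts.count m = n := by
    conv_rhs => rw [← l.parts_sum]
    rw [Finset.sum_multiset_count_of_subset l.parts (Icc 1 n)]
    · apply sum_congr rfl; intros; simp [mul_comm]
    · intro x hx
      rw [Multiset.mem_toFinset] at hx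
      rw [mem_Icc]
      exact ⟨l.parts_pos hx, l.le_of_mem_parts hx⟩
  calc _ = ((∑ m ∈ Icc 1 n, m * l.parts.count m : ℕ) : ℚ) * (F l.parts / zz l.parts) := by rw [h2]
    _ = _ := by
      push_cast
      rw [sum_mul]
      apply sum_congr rfl; intros; ring

end SymChar
namespace SymChar
open Finset

/-- signed count of permutations matching two exponent vectors -/
def DD {N : ℕ} (α β : Fin N → ℕ) : ℚ :=
  ∑ σ : Equiv.Perm (Fin N), ((Equiv.Perm.sign σ : ℤ) : ℚ) * if ∀ k, α k = β (σ k) then 1 else 0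

/-- subtract m at position i -/
def sb {N : ℕ} (α : Fin N → ℕ) (i : Fin N) (m : ℕ) : Fin N → ℕ := Function.update α i (α i - m)

/-- auxiliary indicator -/
def WW {N : ℕ} (α β : Fin N → ℕ) (σ : Equiv.Perm (Fin N)) (i j : Fin N) : ℚ :=
  if β (σ i) < α i ∧ α i + α j = β (σ i) + β (σ j) ∧ ∀ k, k ≠ i → k ≠ j → α k = β (σ k)
  then 1 else 0

lemma WW_rel {N : ℕ} (α β : Fin N → ℕ) (σ : Equiv.Perm (Fin N)) (i j : Fin N) (h : i ≠ j) :
    WW α β σ i j + WW α β σ j i - WW α β (σ * Equiv.swap i j) i j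
      - WW α β (σ * Equiv.swap i j) j i =
    - ((if ∀ k, α k = β (σ k) then 1 else 0) -
       (if ∀ k, α k = β ((σ * Equiv.swap i j) k) then 1 else 0)) := by
  have e : ∀ (τ : Equiv.Perm (Fin N)), (∀ k, α k = β (τ k)) ↔
      (α i = β (τ i) ∧ α j = β (τ j) ∧ ∀ k, k ≠ i → k ≠ j → α k = β (τ k)) := by
    intro τ
    constructor
    · intro h; exact ⟨h _, h _, fun k _ _ => h k⟩
    · rintro ⟨h1, h2, h3⟩ k
      by_cases hi : k = i
      · rw [hi, h1]
      by_cases hj : k = j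
      · rw [hj, h2]
      exact h3 k hi hj
  have e2 : (∀ k, k ≠ i → k ≠ j → α k = β ((σ * Equiv.swap i j) k)) ↔
      (∀ k, k ≠ i → k ≠ j → α k = β (σ k)) := by
    apply forall_congr'; intro k
    constructor
    · intro h hi hj
      simpa [Equiv.swap_apply_of_ne_of_ne hi hj] using h hi hj
    · intro h hi hj
      simpa [Equiv.swap_apply_of_ne_of_ne hi hj] using h hi hj
  have e3 : ∀ (τ : Equiv.Perm (Fin N)), (∀ k, k ≠ j → k ≠ i → α k = β (τ k)) ↔
      (∀ k, k ≠ i → k ≠ j → α k = β (τ k)) := by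
    intro τ
    exact forall_congr' fun k => ⟨fun h a b => h b a, fun h a b => h b a⟩
  rw [if_congr (e σ) rfl rfl, if_congr (e (σ * Equiv.swap i j)) rfl rfl]
  unfold WW
  simp only [e3 σ, e3 (σ * Equiv.swap i j), e2]
  simp only [Equiv.Perm.mul_apply, Equiv.swap_apply_left, Equiv.swap_apply_right]
  by_cases hP : (∀ k, k ≠ i → k ≠ j → α k = β (σ k))
  · simp only [eq_true hP, and_true]
    generalize α i = a
    generalize α j = b
    generalize β (σ i) = c
    generalize β (σ j) = d
    by_cases hs : a + b = c + d
    · have hs2 : a + b = d + c := by omega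
      have hs3 : b + a = c + d := by omega
      have hs4 : b + a = d + c := by omega
      simp only [hs, hs3, hs4, and_true]
      have q1 : d < b ↔ a < c := by omega
      have q2 : c < b ↔ a < d := by omega
      have q3 : (a = c ∧ b = d) ↔ a = c := by omega
      have q4 : (a = d ∧ b = c) ↔ a = d := by omega
      have q5 : (d + c = c + d) := by omega
      simp only [q1, q2, q3, q4, q5, and_true]
      split_ifs <;> first | (exfalso; omega) | norm_num
    · have hs2 : ¬ a + b = d + c := by omega
      have hs3 : ¬ b + a = c + d := by omega
      have hs4 : ¬ b + a = d + c := by omega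
      have hs5 : ¬ (a = c ∧ b = d) := by omega
      have hs6 : ¬ (a = d ∧ b = c) := by omega
      simp only [hs, hs2, hs3, hs4, and_false, hs5, hs6, if_false]
      norm_num
  · simp only [eq_false hP, and_false, if_false]; norm_num

lemma sum_WW {N : ℕ} (α β : Fin N → ℕ) (i j : Fin N) (h : i ≠ j) :
    ∑ σ : Equiv.Perm (Fin N), ((Equiv.Perm.sign σ : ℤ) : ℚ) * (WW α β σ i j + WW α β σ j i)
      = - DD α β := by
  have flip : ∀ f : Equiv.Perm (Fin N) → ℚ,
      ∑ σ : Equiv.Perm (Fin N), ((Equiv.Perm.sign σ : ℤ) : ℚ) * f (σ * Equiv.swap i j) =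
      - ∑ σ : Equiv.Perm (Fin N), ((Equiv.Perm.sign σ : ℤ) : ℚ) * f σ := by
    intro f
    rw [← Equiv.sum_comp (Equiv.mulRight (Equiv.swap i j)) (fun σ => ((Equiv.Perm.sign σ : ℤ) : ℚ) * f σ),
      ← sum_neg_distrib]
    apply sum_congr rfl
    intro σ _
    simp [Equiv.Perm.sign_swap h]
  have h1 := flip (fun σ => WW α β σ i j + WW α β σ j i)
  have h2 := flip (fun σ => if ∀ k, α k = β (σ k) then 1 else 0)
  have h3 : ∑ σ : Equiv.Perm (Fin N), ((Equiv.Perm.sign σ : ℤ) : ℚ) *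
      ((WW α β σ i j + WW α β σ j i) - (WW α β (σ * Equiv.swap i j) i j
      + WW α β (σ * Equiv.swap i j) j i)) = ∑ σ : Equiv.Perm (Fin N), ((Equiv.Perm.sign σ : ℤ) : ℚ) *
    (- ((if ∀ k, α k = β (σ k) then 1 else 0) -
       (if ∀ k, α k = β ((σ * Equiv.swap i j) k) then 1 else 0))) := by
    apply sum_congr rfl
    intro σ _
    rw [← WW_rel α β σ i j h]; ring
  simp only [mul_sub, mul_neg, sum_sub_distrib, sum_neg_distrib] at h3
  rw [h1, h2] at h3
  unfold DD
  linarith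

lemma term_diag {N : ℕ} (α β : Fin N → ℕ) (σ : Equiv.Perm (Fin N)) (i : Fin N) (M : ℕ)
    (hM : α i ≤ M) :
    (∑ m ∈ Icc 1 M, if m ≤ α i ∧ m ≤ β (σ i) then
      (if ∀ k, sb α i m k = sb β (σ i) m (σ k) then (1:ℚ) else 0) else 0) =
    α i * (if ∀ k, α k = β (σ k) then 1 else 0) := by
  have : ∀ m ∈ Icc 1 M, (if m ≤ α i ∧ m ≤ β (σ i) then
      (if ∀ k, sb α i m k = sb β (σ i) m (σ k) then (1:ℚ) else 0) else 0) =
      if m ≤ α i then (if ∀ k, α k = β (σ k) then 1 else 0) else 0 := by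
    intro m _
    by_cases h1 : m ≤ α i
    · by_cases h2 : m ≤ β (σ i)
      · simp only [h1, h2, and_self, if_true]
        congr 1
        apply propext
        apply forall_congr'
        intro k
        by_cases hk : k = i
        · subst hk; simp [sb]; omega
        · simp [sb, hk]
      · have : ¬ ∀ k, α k = β (σ k) := fun h => h2 (h i ▸ h1)
        simp [h1, h2, this]
    · simp [h1]
  rw [sum_congr rfl this, ← sum_filter, sum_const, nsmul_eq_mul]
  congr 2
  have : filter (fun m => m ≤ α i) (Icc 1 M) = Icc 1 (α i) := by
    ext m; simp; omega
  rw [this]; simp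

lemma term_off {N : ℕ} (α β : Fin N → ℕ) (σ : Equiv.Perm (Fin N)) (i j : Fin N) (hij : i ≠ j) (M : ℕ)
    (hM : α i ≤ M) :
    (∑ m ∈ Icc 1 M, if m ≤ α i ∧ m ≤ β (σ j) then
      (if ∀ k, sb α i m k = sb β (σ j) m (σ k) then (1:ℚ) else 0) else 0) =
    WW α β σ i j := by
  have key : ∀ m, (m ≤ α i ∧ m ≤ β (σ j) ∧ ∀ k, sb α i m k = sb β (σ j) m (σ k)) ↔
     (α i = β (σ i) + m ∧ β (σ j) = α j + m ∧ ∀ k, k ≠ i → k ≠ j → α k = β (σ k)) := by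
    intro m
    constructor
    · rintro ⟨h1, h2, h3⟩
      refine ⟨?_, ?_, ?_⟩
      · have := h3 i; simp [sb, hij] at this; omega
      · have := h3 j; simp [sb, hij.symm] at this; omega
      · intro k hi hj
        have := h3 k; simpa [sb, hi, hj] using this
    · rintro ⟨h1, h2, h3⟩
      refine ⟨by omega, by omega, ?_⟩
      intro k
      by_cases hi : k = i
      · subst hi; simp [sb, hij]; omega
      by_cases hj : k = j
      · subst hj; simp [sb, hi]; omega
      simpa [sb, hi, hj] using h3 k hi hj
  have e : ∀ m ∈ Icc 1 M, (if m ≤ α i ∧ m ≤ β (σ j) then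
      (if ∀ k, sb α i m k = sb β (σ j) m (σ k) then (1:ℚ) else 0) else 0) =
      if m = α i - β (σ i) then WW α β σ i j else 0 := by
    intro m hm
    rw [mem_Icc] at hm
    rw [← ite_and, if_congr (and_assoc.trans (key m)) rfl rfl]
    unfold WW
    rw [← ite_and]
    apply if_congr _ rfl rfl
    constructor
    · rintro ⟨h1, h2, h3⟩; exact ⟨by omega, by omega, by omega, h3⟩
    · rintro ⟨h1, h2, h3, h4⟩; exact ⟨by omega, by omega, h4⟩
  rw [sum_congr rfl e, sum_ite_eq']
  split_ifs with h
  · rfl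
  · unfold WW
    rw [if_neg]
    rintro ⟨h1, -⟩
    apply h
    rw [mem_Icc]; omega

lemma DD_rec {N : ℕ} (α β : Fin N → ℕ) (M : ℕ) (hM : ∀ i, α i ≤ M) :
    ∑ m ∈ Icc 1 M, ∑ i, ∑ j, (if m ≤ α i ∧ m ≤ β j then DD (sb α i m) (sb β j m) else 0)
      = (∑ i, (α i : ℚ) - N * (N - 1) / 2) * DD α β := by
  have h1 : ∑ m ∈ Icc 1 M, ∑ i, ∑ j, (if m ≤ α i ∧ m ≤ β j then DD (sb α i m) (sb β j m) else 0)
      = ∑ σ : Equiv.Perm (Fin N), ((Equiv.Perm.sign σ : ℤ) : ℚ) * ∑ i, ∑ j, ∑ m ∈ Icc 1 M,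
        (if m ≤ α i ∧ m ≤ β (σ j) then
      (if ∀ k, sb α i m k = sb β (σ j) m (σ k) then (1:ℚ) else 0) else 0) := by
    have a1 : ∀ m i, ∑ j, (if m ≤ α i ∧ m ≤ β j then DD (sb α i m) (sb β j m) else 0) =
        ∑ σ : Equiv.Perm (Fin N), ∑ j, ((Equiv.Perm.sign σ : ℤ) : ℚ) *
         (if m ≤ α i ∧ m ≤ β (σ j) then
      (if ∀ k, sb α i m k = sb β (σ j) m (σ k) then (1:ℚ) else 0) else 0) := by
      intro m i
      have : ∀ σ : Equiv.Perm (Fin N), ∑ j, ((Equiv.Perm.sign σ : ℤ) : ℚ) *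
         (if m ≤ α i ∧ m ≤ β (σ j) then
      (if ∀ k, sb α i m k = sb β (σ j) m (σ k) then (1:ℚ) else 0) else 0) =
        ∑ j, ((Equiv.Perm.sign σ : ℤ) : ℚ) *
         (if m ≤ α i ∧ m ≤ β j then
      (if ∀ k, sb α i m k = sb β j m (σ k) then (1:ℚ) else 0) else 0) := fun σ =>
        Equiv.sum_comp σ (fun j => ((Equiv.Perm.sign σ : ℤ) : ℚ) *
         (if m ≤ α i ∧ m ≤ β j then
      (if ∀ k, sb α i m k = sb β j m (σ k) then (1:ℚ) else 0) else 0))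
      simp_rw [this]
      rw [sum_comm]
      apply sum_congr rfl
      intro j _
      split_ifs with h
      · rfl
      · simp
    simp_rw [a1, mul_sum]
    have : ∀ m, ∑ i, ∑ σ : Equiv.Perm (Fin N), ∑ j, ((Equiv.Perm.sign σ : ℤ) : ℚ) *
         (if m ≤ α i ∧ m ≤ β (σ j) then
      (if ∀ k, sb α i m k = sb β (σ j) m (σ k) then (1:ℚ) else 0) else 0) =
      ∑ σ : Equiv.Perm (Fin N), ∑ i, ∑ j, ((Equiv.Perm.sign σ : ℤ) : ℚ) *
         (if m ≤ α i ∧ m ≤ β (σ j) then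
      (if ∀ k, sb α i m k = sb β (σ j) m (σ k) then (1:ℚ) else 0) else 0) := fun m => sum_comm
    simp_rw [this]
    rw [sum_comm]
    apply sum_congr rfl; intro σ _
    rw [sum_comm]
    apply sum_congr rfl; intro i _
    rw [sum_comm]
  rw [h1]
  have h2 : ∀ σ : Equiv.Perm (Fin N), ∑ i, ∑ j, ∑ m ∈ Icc 1 M,
        (if m ≤ α i ∧ m ≤ β (σ j) then
      (if ∀ k, sb α i m k = sb β (σ j) m (σ k) then (1:ℚ) else 0) else 0)
      = (∑ i, (α i : ℚ)) * (if ∀ k, α k = β (σ k) then 1 else 0)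
        + ∑ i, ∑ j, if i = j then 0 else WW α β σ i j := by
    intro σ
    rw [sum_mul, ← sum_add_distrib]
    apply sum_congr rfl; intro i _
    have : ∀ j, ∑ m ∈ Icc 1 M,
        (if m ≤ α i ∧ m ≤ β (σ j) then
      (if ∀ k, sb α i m k = sb β (σ j) m (σ k) then (1:ℚ) else 0) else 0) =
      (if i = j then (α i : ℚ) * (if ∀ k, α k = β (σ k) then 1 else 0) else 0) +
        if i = j then 0 else WW α β σ i j := by
      intro j
      by_cases h : i = j
      · subst h
        rw [if_pos rfl, if_pos rfl, add_zero]
        exact term_diag α β σ i M (hM i)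
      · rw [if_neg h, if_neg h, zero_add]
        exact term_off α β σ i j h M (hM i)
    rw [sum_congr rfl (fun j _ => this j), sum_add_distrib, sum_ite_eq]
    simp
  simp_rw [h2, mul_add, sum_add_distrib]
  have h3 : ∑ σ : Equiv.Perm (Fin N), ((Equiv.Perm.sign σ : ℤ) : ℚ) *
      ((∑ i, (α i : ℚ)) * (if ∀ k, α k = β (σ k) then 1 else 0)) = (∑ i, (α i : ℚ)) * DD α β := by
    unfold DD
    rw [mul_sum]
    apply sum_congr rfl; intros; ring
  have h4 : ∑ σ : Equiv.Perm (Fin N), ((Equiv.Perm.sign σ : ℤ) : ℚ) *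
      (∑ i, ∑ j, if i = j then 0 else WW α β σ i j) = ∑ i : Fin N, ∑ j : Fin N, if i = j then 0 else
       ∑ σ : Equiv.Perm (Fin N), ((Equiv.Perm.sign σ : ℤ) : ℚ) * WW α β σ i j := by
    simp_rw [mul_sum]
    rw [sum_comm]
    apply sum_congr rfl; intro i _
    rw [sum_comm]
    apply sum_congr rfl; intro j _
    split_ifs <;> simp
  set S : Fin N → Fin N → ℚ := fun i j => if i = j then 0 else
       ∑ σ : Equiv.Perm (Fin N), ((Equiv.Perm.sign σ : ℤ) : ℚ) * WW α β σ i j with hS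
  have h5 : ∑ i, ∑ j, S i j + ∑ i, ∑ j, S i j = - (N * (N - 1)) * DD α β := by
    have : ∑ i, ∑ j, S i j = ∑ i, ∑ j, S j i := sum_comm
    conv_lhs => rw [this]; arg 2; rw [← this]
    rw [← sum_add_distrib]
    have : ∀ i j, S j i + S i j = if i = j then 0 else - DD α β := by
      intro i j
      by_cases h : i = j
      · simp [hS, h]
      · have h' : ¬ j = i := fun e => h e.symm
        simp only [hS, h, h', if_false]
        rw [← sum_add_distrib, ← sum_WW α β i j h]
        apply sum_congr rfl; intros; ring
    simp_rw [← sum_add_distrib, this]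
    have : ∀ i j : Fin N, (if i = j then 0 else - DD α β) = - DD α β + if i = j then DD α β else 0 := by
      intro i j; split_ifs <;> ring
    simp_rw [this, sum_add_distrib, sum_ite_eq]
    simp
    ring
  rw [h3, h4]
  linarith

end SymChar
namespace SymChar
open Finset MvPolynomial

lemma DD_eq_zero {N : ℕ} (α β : Fin N → ℕ) (h : ¬ Function.Injective α) : DD α β = 0 := by
  simp only [Function.Injective, not_forall] at h
  obtain ⟨i, j, hij, hne⟩ := h
  have : DD α β = - DD α β := by
    conv_lhs => unfold DD
    rw [← Equiv.sum_comp (Equiv.mulRight (Equiv.swap i j)) , DD, ← sum_neg_distrib]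
    apply sum_congr rfl
    intro σ _
    have e : (∀ k, α k = β ((σ * Equiv.swap i j) k)) ↔ ∀ k, α k = β (σ k) := by
      have e1 : ∀ k, α (Equiv.swap i j k) = α k := by
        intro k
        by_cases hi : k = i
        · subst hi; simp [hij]
        by_cases hj : k = j
        · subst hj; simp [hij]
        rw [Equiv.swap_apply_of_ne_of_ne hi hj]
      constructor
      · intro h k
        have := h (Equiv.swap i j k)
        rw [e1] at this
        simpa using this
      · intro h k
        have := h (Equiv.swap i j k)
        rw [e1] at this
        simpa using this
    simp only [Equiv.coe_mulRight, e]
    rw [Equiv.Perm.sign_mul, Equiv.Perm.sign_swap hne]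
    simp only [mul_neg, mul_one, Units.val_neg, Int.cast_neg, neg_mul]
  linarith

lemma DD_self {N : ℕ} (α : Fin N → ℕ) (h : Function.Injective α) : DD α α = 1 := by
  unfold DD
  rw [sum_eq_single 1]
  · simp
  · intro σ _ hσ
    rw [if_neg, mul_zero]
    intro h2
    apply hσ
    ext k
    rw [← h (h2 k)]; rfl
  · simp

/-- sum of the staircase -/
def TT (N : ℕ) : ℕ := ∑ i : Fin N, (i : ℕ)

lemma TT_eq (N : ℕ) : (TT N : ℚ) = N * (N - 1) / 2 := by
  unfold TT
  rw [Fin.sum_univ_eq_sum_range (fun i => i)]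
  have := Finset.sum_range_id_mul_two N
  have h2 : (((∑ i ∈ range N, i) * 2 : ℕ) : ℚ) = (N * (N - 1) : ℕ) := by rw [this]
  rcases N with _ | N
  · simp
  · push_cast at h2 ⊢
    simp at h2 ⊢
    linarith

lemma inj_sum {N : ℕ} (α : Fin N → ℕ) (h : Function.Injective α) :
    TT N + #(univ.image α \ range N) ≤ ∑ i, α i := by
  have h1 : ∑ i, α i = ∑ x ∈ univ.image α, x := (sum_image (f := fun x => x) (fun a _ b _ e => h e)).symm
  have hc : #(univ.image α) = N := by rw [card_image_of_injective _ h]; simp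
  have h2 : TT N = ∑ x ∈ range N, x := Fin.sum_univ_eq_sum_range (fun i => i) N
  have h3 := sum_inter_add_sum_sdiff (univ.image α) (range N) (fun x => x)
  have h4 := sum_inter_add_sum_sdiff (range N) (univ.image α) (fun x => x)
  have h5 := card_sdiff_add_card_inter (univ.image α) (range N)
  have h6 := card_sdiff_add_card_inter (range N) (univ.image α)
  rw [inter_comm] at h4 h6
  have h7 : #(univ.image α \ range N) * N ≤ ∑ x ∈ univ.image α \ range N, x := by
    rw [← smul_eq_mul, ← sum_const]
    apply sum_le_sum
    intro x hx
    simp at hx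
    exact hx.2
  have h8 : ∑ x ∈ range N \ univ.image α, x + #(range N \ univ.image α) ≤ #(range N \ univ.image α) * N := by
    rw [← smul_eq_mul, ← sum_const, card_eq_sum_ones, ← sum_add_distrib]
    apply sum_le_sum
    intro x hx
    simp at hx
    exact hx.1
  rw [card_range] at h6
  have h9 : #(range N \ univ.image α) = #(univ.image α \ range N) := by omega
  rw [h9] at h8
  omega

lemma inj_perm {N : ℕ} (α : Fin N → ℕ) (h : Function.Injective α) (hs : ∑ i, α i = TT N) :
    ∃ τ : Equiv.Perm (Fin N), ∀ k, α k = τ k := by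
  have h1 := inj_sum α h
  have h2 : #(univ.image α \ range N) = 0 := by omega
  rw [card_eq_zero, sdiff_eq_empty_iff_subset] at h2
  have h3 : ∀ k, α k < N := fun k => mem_range.1 (h2 (mem_image_of_mem _ (mem_univ k)))
  refine ⟨Equiv.ofBijective (fun k => (⟨α k, h3 k⟩ : Fin N)) (Finite.injective_iff_bijective.1 ?_), ?_⟩
  · intro a b e
    simp at e
    exact h e
  · intro k; simp

/-- exponent vector as finsupp -/
noncomputable def fs {N : ℕ} (α : Fin N → ℕ) : Fin N →₀ ℕ := Finsupp.equivFunOnFinite.symm α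

@[simp] lemma fs_apply {N : ℕ} (α : Fin N → ℕ) (i : Fin N) : fs α i = α i := rfl

/-- the Vandermonde polynomial -/
noncomputable def aa (N : ℕ) : MvPolynomial (Fin N) ℤ :=
  ∑ σ : Equiv.Perm (Fin N), monomial (fs fun k => (σ k : ℕ)) (Equiv.Perm.sign σ : ℤ)

/-- product of power sums -/
noncomputable def pp (N : ℕ) (s : Multiset ℕ) : MvPolynomial (Fin N) ℤ :=
  (s.map (psum (Fin N) ℤ)).prod

/-- Frobenius formula -/
noncomputable def Psi {N : ℕ} (α : Fin N → ℕ) (s : Multiset ℕ) : ℤ := coeff (fs α) (aa N * pp N s)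

lemma Psi_cons {N : ℕ} (α : Fin N → ℕ) (m : ℕ) (s : Multiset ℕ) :
    Psi α (m ::ₘ s) = ∑ i, if m ≤ α i then Psi (sb α i m) s else 0 := by
  unfold Psi
  have : aa N * pp N (m ::ₘ s) = ∑ i, (aa N * pp N s) * monomial (Finsupp.single i m) 1 := by
    rw [pp, Multiset.map_cons, Multiset.prod_cons, ← pp, psum, ← mul_sum]
    simp_rw [X_pow_eq_monomial]
    ring
  rw [this, coeff_sum]
  apply sum_congr rfl
  intro i _
  rw [coeff_mul_monomial', mul_one, if_congr (Finsupp.single_le_iff (f := fs α)) rfl rfl]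
  simp only [fs_apply]
  congr 2
  ext k
  by_cases hk : k = i
  · subst hk; simp [sb]
  · simp [sb, hk]

lemma Psi_zero {N : ℕ} (α : Fin N → ℕ) :
    (Psi α 0 : ℚ) = DD α (fun k => (k : ℕ)) := by
  unfold Psi DD
  simp only [pp, Multiset.map_zero, Multiset.prod_zero, mul_one, aa, coeff_sum, coeff_monomial]
  push_cast
  apply sum_congr rfl
  intro σ _
  have : (fs (fun k => ((σ k : Fin N) : ℕ)) = fs α) ↔ ∀ k, α k = (σ k : ℕ) := by
    rw [Finsupp.ext_iff]
    exact forall_congr' fun k => eq_comm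
  rw [if_congr this rfl rfl]
  split_ifs <;> simp

lemma DD_perm {N : ℕ} (α β : Fin N → ℕ) (hβ : Function.Injective β) (τ : Equiv.Perm (Fin N))
    (h : ∀ k, α k = β (τ k)) : DD α β = (Equiv.Perm.sign τ : ℤ) := by
  unfold DD
  rw [sum_eq_single τ]
  · simp [h]
  · intro σ _ hσ
    rw [if_neg, mul_zero]
    intro h2
    apply hσ
    ext k
    rw [hβ ((h2 k).symm.trans (h k))]
  · simp

lemma ES_zero (F : Multiset ℕ → ℚ) : ES 0 F = F 0 := by
  unfold ES
  rw [Fintype.sum_unique]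
  simp [zz]

lemma ES_sum {ι : Type*} (t : Finset ι) (n : ℕ) (F : ι → Multiset ℕ → ℚ) :
    ES n (fun s => ∑ i ∈ t, F i s) = ∑ i ∈ t, ES n (F i) := by
  unfold ES
  rw [sum_comm]
  simp_rw [sum_div]

lemma ES_ite (n : ℕ) (c : Prop) [Decidable c] (F : Multiset ℕ → ℚ) :
    ES n (fun s => if c then F s else 0) = if c then ES n F else 0 := by
  unfold ES
  split_ifs <;> simp

lemma sum_sb {N : ℕ} (α : Fin N → ℕ) (i : Fin N) (m : ℕ) (h : m ≤ α i) :
    ∑ k, sb α i m k + m = ∑ k, α k := by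
  unfold sb
  rw [sum_update_of_mem (mem_univ i), ← add_sum_erase _ _ (mem_univ i), sdiff_singleton_eq_erase]
  omega

lemma Psi_cons_mul {N : ℕ} (α β : Fin N → ℕ) (m : ℕ) (s : Multiset ℕ) :
    ((Psi α (m ::ₘ s) : ℚ) * Psi β (m ::ₘ s)) =
    ∑ i, ∑ j, if m ≤ α i ∧ m ≤ β j then (Psi (sb α i m) s : ℚ) * Psi (sb β j m) s else 0 := by
  rw [Psi_cons, Psi_cons]
  push_cast
  rw [sum_mul_sum]
  apply sum_congr rfl; intro i _
  apply sum_congr rfl; intro j _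
  by_cases h1 : m ≤ α i <;> by_cases h2 : m ≤ β j <;> simp [h1, h2]

theorem orthonormal {N : ℕ} (n : ℕ) : ∀ (α β : Fin N → ℕ), ∑ i, α i = n + TT N →
    ∑ i, β i = n + TT N → ES n (fun s => Psi α s * Psi β s) = DD α β := by
  induction n using Nat.strong_induction_on with
  | _ n ih =>
  intro α β hα hβ
  rcases Nat.eq_zero_or_pos n with rfl | hn
  · rw [ES_zero, Psi_zero, Psi_zero]
    rw [zero_add] at hα hβ
    have hv : Function.Injective (fun k : Fin N => (k : ℕ)) := Fin.val_injective
    by_cases h1 : Function.Injective α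
    · obtain ⟨σ, hσ⟩ := inj_perm α h1 hα
      rw [DD_perm α _ hv σ hσ]
      by_cases h2 : Function.Injective β
      · obtain ⟨τ, hτ⟩ := inj_perm β h2 hβ
        rw [DD_perm β _ hv τ hτ, DD_perm α β h2 (τ⁻¹ * σ)]
        · simp [mul_comm]
        · intro k; rw [hσ, hτ]; simp
      · rw [DD_eq_zero β _ h2, mul_zero]
        unfold DD
        rw [sum_eq_zero]
        intro ρ _
        rw [if_neg, mul_zero]
        intro h3
        apply h2
        intro a b hab
        have ha := h3 (ρ⁻¹ a)
        have hb := h3 (ρ⁻¹ b)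
        simp at ha hb
        have := h1 (ha.trans (hab.trans hb.symm))
        simpa using this
    · rw [DD_eq_zero α _ h1, DD_eq_zero α _ h1, zero_mul]
  · have h1 := ES_rec n (fun s => (Psi α s : ℚ) * Psi β s)
    simp_rw [Psi_cons_mul, ES_sum, ES_ite] at h1
    have h2 : ∑ m ∈ Icc 1 n, ∑ i, ∑ j, (if m ≤ α i ∧ m ≤ β j then
        ES (n - m) (fun s => (Psi (sb α i m) s : ℚ) * Psi (sb β j m) s) else 0) =
        ∑ m ∈ Icc 1 (n + TT N), ∑ i, ∑ j,
          if m ≤ α i ∧ m ≤ β j then DD (sb α i m) (sb β j m) else 0 := by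
      rw [← sum_subset (Icc_subset_Icc_right (Nat.le_add_right n (TT N)))]
      · apply sum_congr rfl; intro m hm
        rw [mem_Icc] at hm
        apply sum_congr rfl; intro i _
        apply sum_congr rfl; intro j _
        split_ifs with h
        · have s1 := sum_sb α i m h.1
          have s2 := sum_sb β j m h.2
          exact ih (n - m) (by omega) _ _ (by omega) (by omega)
        · rfl
      · intro m hm hm'
        rw [mem_Icc] at hm hm'
        apply sum_eq_zero; intro i _
        apply sum_eq_zero; intro j _
        split_ifs with h
        · apply DD_eq_zero
          intro hi
          have := inj_sum _ hi
          have s1 := sum_sb α i m h.1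
          omega
        · rfl
    rw [h2, DD_rec α β] at h1
    · have h3 : (∑ i, (α i : ℚ)) = n + TT N := by exact_mod_cast hα
      rw [h3, TT_eq, add_sub_cancel_right] at h1
      exact mul_left_cancel₀ (by positivity) h1
    · intro i
      rw [← hα]
      exact single_le_sum (fun _ _ => Nat.zero_le _) (mem_univ i)

end SymChar
namespace SymChar
open Finset MvPolynomial

/-- orbit of a point -/
noncomputable def orb {n : ℕ} (g : Equiv.Perm (Fin n)) (k : Fin n) : Finset (Fin n) :=
  open Classical in univ.filter (fun j => g.SameCycle k j)

lemma mem_orb {n : ℕ} (g : Equiv.Perm (Fin n)) (k j : Fin n) : j ∈ orb g k ↔ g.SameCycle k j := by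
  simp [orb]

lemma orb_eq_iff {n : ℕ} (g : Equiv.Perm (Fin n)) (k j : Fin n) :
    orb g k = orb g j ↔ g.SameCycle j k := by
  constructor
  · intro h
    rw [← mem_orb, ← h, mem_orb]
  · intro h
    ext x
    rw [mem_orb, mem_orb]
    exact ⟨fun hx => h.trans hx, fun hx => h.symm.trans hx⟩

/-- all orbits -/
noncomputable def orbs {n : ℕ} (g : Equiv.Perm (Fin n)) : Finset (Finset (Fin n)) :=
  univ.image (orb g)

lemma orbs_eq {n : ℕ} (g : Equiv.Perm (Fin n)) :
    orbs g = g.cycleFactorsFinset.image Equiv.Perm.support ∪ (g.supportᶜ).image (fun k => {k}) := by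
  have h1 : ∀ k ∈ g.support, orb g k = (g.cycleOf k).support := by
    intro k hk
    ext x
    rw [mem_orb, Equiv.Perm.mem_support_cycleOf_iff]
    simp only [hk, and_true]
  have h2 : ∀ k ∉ g.support, orb g k = {k} := by
    intro k hk
    ext x
    rw [mem_orb, mem_singleton]
    constructor
    · intro h
      exact (h.eq_of_left (by simpa [Function.IsFixedPt] using hk)).symm
    · rintro rfl; exact Equiv.Perm.SameCycle.refl _ _
  ext o
  simp only [orbs, mem_image, mem_univ, true_and, mem_union, mem_compl]
  constructor
  · rintro ⟨k, rfl⟩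
    by_cases hk : k ∈ g.support
    · left
      exact ⟨g.cycleOf k, Equiv.Perm.cycleOf_mem_cycleFactorsFinset_iff.2 hk, (h1 k hk).symm⟩
    · right
      exact ⟨k, hk, (h2 k hk).symm⟩
  · rintro (⟨c, hc, rfl⟩ | ⟨k, hk, rfl⟩)
    · have hc' := (Equiv.Perm.mem_cycleFactorsFinset_iff.1 hc).1
      obtain ⟨a, ha⟩ := hc'.nonempty_support
      have := Equiv.Perm.cycle_is_cycleOf ha hc
      have hs : a ∈ g.support := Equiv.Perm.mem_cycleFactorsFinset_support_le hc ha
      exact ⟨a, by rw [h1 a hs, ← this]⟩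
    · exact ⟨k, h2 k hk⟩

lemma prod_ct {R : Type*} [CommMonoid R] {n : ℕ} (g : Equiv.Perm (Fin n)) (φ : ℕ → R) :
    ((ct g).map φ).prod = ∏ o ∈ orbs g, φ (#o) := by
  rw [orbs_eq, prod_union, prod_image, prod_image]
  · unfold ct
    rw [Equiv.Perm.parts_partition, Multiset.map_add, Multiset.prod_add, Equiv.Perm.cycleType_def,
      Multiset.map_map]
    congr 1
    simp [card_compl]
  · intro a _ b _ h
    simpa using h
  · intro c hc d hd h
    have hc' := (Equiv.Perm.mem_cycleFactorsFinset_iff.1 hc).1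
    obtain ⟨a, ha⟩ := hc'.nonempty_support
    have e1 := Equiv.Perm.cycle_is_cycleOf ha hc
    change c.support = d.support at h
    rw [h] at ha
    rw [e1, ← Equiv.Perm.cycle_is_cycleOf ha hd]
  · rw [disjoint_left]
    intro o h1 h2
    simp only [mem_image, mem_compl] at h1 h2
    obtain ⟨c, hc, rfl⟩ := h1
    obtain ⟨k, hk, h⟩ := h2
    apply hk
    apply Equiv.Perm.mem_cycleFactorsFinset_support_le hc
    rw [← h]; simp

lemma const_on {n N : ℕ} (g : Equiv.Perm (Fin n)) (f : Fin n → Fin N) (hf : ∀ k, f (g k) = f k)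
    {a b : Fin n} (h : g.SameCycle a b) : f a = f b := by
  obtain ⟨i, rfl⟩ := h
  have hf' : ∀ k, f (g⁻¹ k) = f k := by
    intro k
    rw [← hf (g⁻¹ k)]; simp
  induction i using Int.induction_on with
  | zero => simp
  | succ i ih => rw [ih, add_comm, zpow_add, Equiv.Perm.mul_apply, zpow_one, hf]
  | pred i ih => rw [ih, sub_eq_add_neg, add_comm, zpow_add, Equiv.Perm.mul_apply, zpow_neg_one, hf']

/-- content of a function -/
noncomputable def cnt {n N : ℕ} (f : Fin n → Fin N) : Fin N →₀ ℕ := ∑ k, Finsupp.single (f k) 1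

lemma pp_ct {n N : ℕ} (g : Equiv.Perm (Fin n)) :
    pp N (ct g) = ∑ f : Fin n → Fin N with ∀ k, f (g k) = f k, monomial (cnt f) 1 := by
  classical
  unfold pp
  rw [prod_ct]
  simp_rw [psum]
  rw [← prod_coe_sort (orbs g) (fun o => ∑ i : Fin N, (X i : MvPolynomial (Fin N) ℤ) ^ #o), prod_univ_sum]
  have hO : ∀ k, orb g k ∈ orbs g := fun k => mem_image_of_mem _ (mem_univ k)
  have hr : ∀ o : orbs g, ∃ k, orb g k = o.1 := by
    rintro ⟨o, ho⟩
    simpa [orbs] using ho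
  choose r hr using hr
  refine sum_bij' (fun F _ => fun k => F ⟨orb g k, hO k⟩) (fun f _ => fun o => f (r o)) ?_ ?_ ?_ ?_ ?_
  · intro F _
    simp only [mem_filter, mem_univ, true_and]
    intro k
    congr 2
    rw [orb_eq_iff]
    exact ⟨1, by simp⟩
  · intro f _
    simp
  · intro F _
    funext o
    exact congrArg F (Subtype.ext (hr o))
  · intro f hf
    simp only [mem_filter, mem_univ, true_and] at hf
    ext k
    congr 1
    apply const_on g f hf
    rw [← orb_eq_iff, hr]
  · intro F _
    have e : monomial (cnt (fun k => F ⟨orb g k, hO k⟩)) (1:ℤ) = ∏ k, X (F ⟨orb g k, hO k⟩) := by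
      unfold cnt
      rw [monomial_sum_one]
      rfl
    rw [e, ← prod_fiberwise (s := univ) (g := fun k => (⟨orb g k, hO k⟩ : orbs g))]
    apply prod_congr rfl
    intro o _
    rw [prod_congr rfl (g := fun _ => X (F o))]
    · rw [prod_const]
      congr 1
      congr 1
      ext k
      simp only [mem_filter, mem_univ, true_and]
      rw [← hr o, mem_orb, ← orb_eq_iff, hr, Subtype.ext_iff]
    · intro k hk
      simp only [mem_filter, mem_univ, true_and] at hk
      rw [hk]

lemma coeff_pp {n N : ℕ} (g : Equiv.Perm (Fin n)) (γ : Fin N →₀ ℕ) :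
    coeff γ (pp N (ct g)) =
      #{f : Fin n → Fin N | (∀ k, f (g k) = f k) ∧ cnt f = γ} := by
  classical
  rw [pp_ct, coeff_sum]
  simp_rw [coeff_monomial]
  rw [sum_boole, filter_filter]

end SymChar
namespace SymChar
open Finset MvPolynomial

open scoped ComplexOrder in
lemma conj_char {G W : Type*} [Group G] [Fintype G] [AddCommGroup W] [Module ℂ W]
    [FiniteDimensional ℂ W] (ρ : Representation ℂ G W) (g : G) :
    star (ρ.character g) = ρ.character g⁻¹ := by
  classical
  let b := Module.finBasis ℂ W
  let M : G → Matrix (Fin (Module.finrank ℂ W)) (Fin (Module.finrank ℂ W)) ℂ :=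
    fun g => LinearMap.toMatrix b b (ρ g)
  have hM : ∀ g h, M (g * h) = M g * M h := by
    intro g h
    simp only [M, map_mul]
    exact LinearMap.toMatrix_mul b _ _
  have hM1 : M 1 = 1 := by
    simp only [M, map_one]
    exact LinearMap.toMatrix_one b
  have htr : ∀ g, ρ.character g = (M g).trace := by
    intro g
    exact LinearMap.trace_eq_matrix_trace ℂ b (ρ g)
  let P := ∑ h, (M h).conjTranspose * M h
  have hP : P.PosDef := by
    have : P = 1 + ∑ h ∈ univ.erase (1:G), (M h).conjTranspose * M h := by
      simp only [P]
      rw [← add_sum_erase univ _ (mem_univ (1:G)), hM1]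
      simp
    rw [this]
    apply Matrix.PosDef.add_posSemidef Matrix.PosDef.one
    apply Matrix.posSemidef_sum
    intro h _
    exact Matrix.posSemidef_conjTranspose_mul_self _
  have hPg : (M g).conjTranspose * P * M g = P := by
    simp only [P]
    rw [mul_sum, sum_mul, ← Equiv.sum_comp (Equiv.mulRight g) (fun h => (M h).conjTranspose * M h)]
    apply sum_congr rfl
    intro h _
    simp only [Equiv.coe_mulRight]
    rw [hM, Matrix.conjTranspose_mul]
    simp only [mul_assoc]
  have hu : IsUnit P.det := (Matrix.isUnit_iff_isUnit_det _).1 hP.isUnit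
  have h2 : (M g).conjTranspose * P = P * M g⁻¹ := by
    calc (M g).conjTranspose * P = (M g).conjTranspose * P * (M g * M g⁻¹) := by
          rw [← hM, mul_inv_cancel, hM1, mul_one]
      _ = _ := by rw [← mul_assoc, hPg]
  have h3 : (M g).conjTranspose = P * M g⁻¹ * P⁻¹ := by
    rw [← h2, mul_assoc, Matrix.mul_nonsing_inv _ hu, mul_one]
  rw [htr, htr, ← Matrix.trace_conjTranspose, h3, Matrix.trace_mul_comm, ← mul_assoc,
    Matrix.nonsing_inv_mul _ hu, one_mul]

lemma cnt_comp {n N : ℕ} (f : Fin n → Fin N) (g : Equiv.Perm (Fin n)) :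
    cnt (fun k => f (g k)) = cnt f := by
  unfold cnt
  exact Equiv.sum_comp g (fun k => Finsupp.single (f k) 1)

/-- permutation representation on functions on words of given content -/
noncomputable def prep (n N : ℕ) (γ : Fin N →₀ ℕ) :
    Representation ℂ (Equiv.Perm (Fin n)) ({f : Fin n → Fin N // cnt f = γ} → ℂ) where
  toFun g := LinearMap.funLeft ℂ ℂ (fun f => ⟨fun k => f.1 (g k), by rw [cnt_comp, f.2]⟩)
  map_one' := by ext; simp [LinearMap.funLeft]
  map_mul' g h := by
    apply LinearMap.ext
    intro u
    funext f
    rfl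

lemma prep_char (n N : ℕ) (γ : Fin N →₀ ℕ) (g : Equiv.Perm (Fin n)) :
    (prep n N γ).character g = ((coeff γ (pp N (ct g)) : ℤ) : ℂ) := by
  classical
  rw [coeff_pp]
  unfold Representation.character
  rw [LinearMap.trace_eq_matrix_trace ℂ (Pi.basisFun ℂ _)]
  simp only [Matrix.trace, Matrix.diag]
  have : ∀ f : {f : Fin n → Fin N // cnt f = γ},
      LinearMap.toMatrix (Pi.basisFun ℂ _) (Pi.basisFun ℂ _) (prep n N γ g) f f =
        if (∀ k, f.1 (g k) = f.1 k) then (1:ℂ) else 0 := by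
    intro f
    rw [LinearMap.toMatrix_apply]
    simp only [prep, MonoidHom.coe_mk, OneHom.coe_mk, Pi.basisFun_apply, Pi.basisFun_repr,
      LinearMap.funLeft_apply, Pi.single_apply]
    congr 1
    rw [Subtype.ext_iff, funext_iff]
  rw [sum_congr rfl (fun f _ => this f), sum_boole]
  push_cast
  congr 1
  rw [← card_map (Function.Embedding.subtype _)]
  congr 1
  ext f
  simp only [mem_map, mem_filter, mem_univ, true_and, Function.Embedding.coe_subtype, Subtype.exists,
    exists_and_right, exists_eq_right]
  tauto

section
variable {n : ℕ} {W : Type*} [AddCommGroup W] [Module ℂ W] [FiniteDimensional ℂ W]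
  (ρ : Representation ℂ (Equiv.Perm (Fin n)) W)

lemma int_coeff (N : ℕ) (γ : Fin N →₀ ℕ) :
    ∃ k : ℤ, ∑ g, ρ.character g * ((coeff γ (pp N (ct g)) : ℤ) : ℂ) = (n.factorial : ℂ) * k := by
  have hc : Nat.card (Equiv.Perm (Fin n)) = n.factorial := by
    simp [Fintype.card_perm]
  have h0 : (Nat.card (Equiv.Perm (Fin n)) : ℂ) ≠ 0 := by
    rw [hc]; exact_mod_cast n.factorial_ne_zero
  let _ : Invertible (Nat.card (Equiv.Perm (Fin n)) : ℂ) := invertibleOfNonzero h0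
  have := Representation.card_inv_mul_sum_char_eq_finrank (ρ.tprod (prep n N γ))
  rw [Representation.char_tensor] at this
  refine ⟨(Module.finrank ℂ (ρ.tprod (prep n N γ)).invariants : ℕ), ?_⟩
  · rw [inv_mul_eq_iff_eq_mul₀ h0, hc] at this
    simp only [Pi.mul_apply, prep_char] at this
    rw [this, Int.cast_natCast]

lemma Psi_expand {N : ℕ} (α : Fin N → ℕ) (s : Multiset ℕ) :
    Psi α s = ∑ σ : Equiv.Perm (Fin N), (Equiv.Perm.sign σ : ℤ) *
      (if fs (fun k => (σ k : ℕ)) ≤ fs α then coeff (fs α - fs (fun k => (σ k : ℕ))) (pp N s) else 0) := by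
  unfold Psi aa
  rw [sum_mul, coeff_sum]
  apply sum_congr rfl
  intro σ _
  rw [coeff_monomial_mul']
  simp

lemma int_Psi {N : ℕ} (α : Fin N → ℕ) :
    ∃ k : ℤ, ∑ g, ρ.character g * ((Psi α (ct g) : ℤ) : ℂ) = (n.factorial : ℂ) * k := by
  choose K hK using int_coeff ρ N
  refine ⟨∑ σ : Equiv.Perm (Fin N), (Equiv.Perm.sign σ : ℤ) *
      (if fs (fun k => (σ k : ℕ)) ≤ fs α then K (fs α - fs (fun k => (σ k : ℕ))) else 0), ?_⟩
  simp_rw [Psi_expand]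
  push_cast
  simp_rw [mul_sum]
  rw [sum_comm]
  apply sum_congr rfl
  intro σ _
  split_ifs
  · rw [mul_left_comm, ← hK, mul_sum]
    apply sum_congr rfl
    intro g _
    ring
  · simp

lemma exists_Psi (hW : Module.finrank ℂ W ≠ 0) :
    ∃ α : Fin n → ℕ, ∑ g, ρ.character g * ((Psi α (ct g) : ℤ) : ℂ) ≠ 0 := by
  classical
  by_contra! h
  let ι := MvPolynomial.map (σ := Fin n) (Int.castRingHom ℂ)
  have haa : ι (aa n) ≠ 0 := by
    intro h0
    have h1 : aa n = 0 := by
      apply MvPolynomial.map_injective (Int.castRingHom ℂ) Int.cast_injective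
      rw [map_zero]; exact h0
    have h2 : (Psi (N := n) (fun k => (k:ℕ)) 0 : ℚ) = 1 := by
      rw [Psi_zero, DD_self]
      exact Fin.val_injective
    unfold Psi at h2
    rw [h1] at h2
    simp at h2
  have hz : ι (aa n) * ∑ g, C (ρ.character g) * ι (pp n (ct g)) = 0 := by
    ext γ
    rw [mul_sum, coeff_sum, coeff_zero]
    have hγ : γ = fs (fun k => γ k) := by ext k; simp [fs_apply]
    rw [← h (fun k => γ k)]
    apply sum_congr rfl
    intro g _
    rw [mul_left_comm, coeff_C_mul, ← map_mul, coeff_map]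
    unfold Psi
    rw [← hγ]
    rfl
  have hz2 := (mul_eq_zero.1 hz).resolve_left haa
  have h3 := congrArg (coeff (∑ i : Fin n, Finsupp.single i 1)) hz2
  rw [coeff_sum, coeff_zero, sum_eq_single (1 : Equiv.Perm (Fin n))] at h3
  · rw [coeff_C_mul, coeff_map, coeff_pp, mul_eq_zero, Representation.char_one] at h3
    rcases h3 with h3 | h3
    · exact hW (by exact_mod_cast h3)
    · simp only [eq_intCast, Int.cast_natCast, Nat.cast_eq_zero, card_eq_zero] at h3
      have : (id : Fin n → Fin n) ∈ (∅ : Finset (Fin n → Fin n)) := by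
        rw [← h3]
        simp [cnt]
      simp at this
  · intro g _ hg
    rw [coeff_C_mul, coeff_map, coeff_pp]
    rw [filter_eq_empty_iff.2, card_empty]
    · simp
    · rintro f _ ⟨h1, h2⟩
      apply hg
      have hs : Function.Surjective f := by
        intro i
        have := DFunLike.congr_fun h2 i
        simp only [cnt, Finsupp.finsetSum_apply, Finsupp.single_apply] at this
        by_contra! hne
        simp [hne] at this
      have hi : Function.Injective f := Finite.injective_iff_surjective.2 hs
      ext k
      rw [hi (h1 k)]; rfl
  · simp

lemma Psi_deg {N : ℕ} (s : Multiset ℕ) : ∀ α : Fin N → ℕ, Psi α s ≠ 0 → ∑ k, α k = s.sum + TT N := by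
  induction s using Multiset.induction_on with
  | empty =>
    intro α h
    have h1 : (Psi α 0 : ℚ) ≠ 0 := by exact_mod_cast h
    rw [Psi_zero] at h1
    unfold DD at h1
    obtain ⟨σ, _, hσ⟩ := exists_ne_zero_of_sum_ne_zero h1
    have : ∀ k, α k = (σ k : ℕ) := by
      by_contra hne
      simp [hne] at hσ
    simp_rw [this]
    rw [Equiv.sum_comp σ (fun k => (k:ℕ))]
    simp [TT]
  | cons m s ih =>
    intro α h
    rw [Psi_cons] at h
    obtain ⟨i, _, hi⟩ := exists_ne_zero_of_sum_ne_zero h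
    split_ifs at hi with hm
    swap
    · exact absurd rfl hi
    have := ih _ hi
    rw [← sum_sb α i m hm, this, Multiset.sum_cons]
    ring

end
end SymChar
namespace SymChar
open Finset MvPolynomial

lemma Psi_inj {N : ℕ} (α : Fin N → ℕ) (s : Multiset ℕ) (hs : ∀ i ∈ s, 0 < i) (h : Psi α s ≠ 0) :
    Function.Injective α := by
  by_contra hi
  have hd := Psi_deg s α h
  have h1 := orthonormal s.sum α α hd hd
  rw [DD_eq_zero α α hi] at h1
  unfold ES at h1
  rw [sum_eq_zero_iff_of_nonneg] at h1
  · have h2 := h1 ⟨s, fun {i} hi => hs i hi, rfl⟩ (mem_univ _)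
    have h3 := zz_pos s hs
    have h4 : (zz s : ℚ) ≠ 0 := by exact_mod_cast h3.ne'
    have h5 : (Psi α s : ℚ) ≠ 0 := by exact_mod_cast h
    simp only [div_eq_zero_iff, mul_self_eq_zero, h4, h5, or_self] at h2
  · intro l _
    apply div_nonneg (mul_self_nonneg _) (by positivity)

section
variable {n : ℕ} {W : Type*} [AddCommGroup W] [Module ℂ W] [FiniteDimensional ℂ W]
  (ρ : Representation ℂ (Equiv.Perm (Fin n)) W)

lemma char_eq (hW : Module.finrank ℂ W ≠ 0)
    (ho : ∑ g, ρ.character g * ρ.character g⁻¹ = (n.factorial : ℂ)) :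
    ∃ α : Fin n → ℕ, ∃ k : ℤ, k * k = 1 ∧ Function.Injective α ∧ ∑ i, α i = n + TT n ∧
      ∀ g, ρ.character g = k * ((Psi α (ct g) : ℤ) : ℂ) := by
  obtain ⟨α, hα⟩ := exists_Psi ρ hW
  obtain ⟨k, hk⟩ := int_Psi ρ α
  obtain ⟨g0, _, hg0⟩ := exists_ne_zero_of_sum_ne_zero hα
  have hp : Psi α (ct g0) ≠ 0 := by
    intro h
    simp [h] at hg0
  have hdeg := Psi_deg _ α hp
  rw [ct_sum] at hdeg
  have hinj := Psi_inj α _ (fun i hi => ct_pos g0 hi) hp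
  have hq : ∑ g : Equiv.Perm (Fin n), (Psi α (ct g) : ℚ) * Psi α (ct g) = n.factorial := by
    rw [sum_perm n (fun s => (Psi α s : ℚ) * Psi α s), orthonormal n α α hdeg hdeg, DD_self α hinj, mul_one]
  have hq2 : ∑ g : Equiv.Perm (Fin n), Psi α (ct g) * Psi α (ct g) = n.factorial := by
    exact_mod_cast hq
  have hq3 : ∑ g : Equiv.Perm (Fin n), ((Psi α (ct g) : ℤ) : ℂ) * ((Psi α (ct g) : ℤ) : ℂ)
      = n.factorial := by
    exact_mod_cast congrArg (Int.cast (R := ℂ)) hq2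
  have hk0 : k ≠ 0 := by
    rintro rfl
    apply hα
    rw [hk]; simp
  have hks : ∑ g, star (ρ.character g) * ((Psi α (ct g) : ℤ) : ℂ) = (n.factorial : ℂ) * k := by
    have := congrArg star hk
    simpa [star_sum, star_mul'] using this
  let D : Equiv.Perm (Fin n) → ℂ := fun g => ρ.character g - k * ((Psi α (ct g) : ℤ) : ℂ)
  have hD : ∑ g, (Complex.normSq (D g) : ℂ) = n.factorial * (1 - k * k) := by
    have : ∀ g, (Complex.normSq (D g) : ℂ) = ρ.character g * ρ.character g⁻¹
        - k * (ρ.character g * ((Psi α (ct g) : ℤ) : ℂ))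
        - k * (star (ρ.character g) * ((Psi α (ct g) : ℤ) : ℂ))
        + k * k * (((Psi α (ct g) : ℤ) : ℂ) * ((Psi α (ct g) : ℤ) : ℂ)) := by
      intro g
      rw [← Complex.mul_conj, ← conj_char]
      simp only [D, map_sub, map_mul, map_intCast]
      simp only [starRingEnd_apply]
      ring
    rw [sum_congr rfl (fun g _ => this g), sum_add_distrib, sum_sub_distrib, sum_sub_distrib,
      ← mul_sum, ← mul_sum, ← mul_sum, ho, hk, hks, hq3]
    ring
  have hD2 : ∑ g, Complex.normSq (D g) = n.factorial * (1 - k * k) := by exact_mod_cast hD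
  have hk1 : (1 : ℝ) ≤ k * k := by
    have : 1 ≤ k * k := by
      have := mul_self_pos.2 hk0
      linarith
    exact_mod_cast this
  have hpos : (0:ℝ) < n.factorial := by exact_mod_cast n.factorial_pos
  have hnn : 0 ≤ ∑ g, Complex.normSq (D g) := sum_nonneg (fun g _ => Complex.normSq_nonneg _)
  have hkk : (k * k : ℝ) = 1 := by
    nlinarith
  have hz : ∑ g, Complex.normSq (D g) = 0 := by rw [hD2, hkk]; simp
  rw [sum_eq_zero_iff_of_nonneg (fun g _ => Complex.normSq_nonneg _)] at hz
  refine ⟨α, k, by exact_mod_cast hkk, hinj, hdeg, fun g => ?_⟩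
  have := Complex.normSq_eq_zero.1 (hz g (mem_univ g))
  exact sub_eq_zero.1 this

end

lemma sb_sq {N : ℕ} (α : Fin N → ℕ) (i : Fin N) (m : ℕ) (h : m ≤ α i) :
    ∑ k, (sb α i m k : ℤ) ^ 2 + 2 * m * α i = ∑ k, (α k : ℤ) ^ 2 + m ^ 2 := by
  rw [← add_sum_erase _ _ (mem_univ i), ← add_sum_erase univ (fun k => (α k : ℤ) ^ 2) (mem_univ i)]
  rw [sum_congr rfl (g := fun k => (α k : ℤ) ^ 2)]
  · simp only [sb, Function.update_self]
    rw [Nat.cast_sub h]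
    ring
  · intro k hk
    simp only [sb]
    rw [Function.update_of_ne (ne_of_mem_erase hk)]

lemma DD_sb {N : ℕ} (α : Fin N → ℕ) (hα : Function.Injective α) (i j : Fin N) (m : ℕ) (hm : 0 < m)
    (hi : m ≤ α i) (hj : m ≤ α j) (hij : i ≠ j) : DD (sb α i m) (sb α j m) = 0 := by
  by_contra h
  unfold DD at h
  obtain ⟨σ, _, hσ⟩ := exists_ne_zero_of_sum_ne_zero h
  have h1 : ∀ k, sb α i m k = sb α j m (σ k) := by
    by_contra hne
    simp [hne] at hσ
  have h2 : ∑ k, (sb α i m k : ℤ) ^ 2 = ∑ k, (sb α j m k : ℤ) ^ 2 := by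
    simp_rw [h1]
    exact Equiv.sum_comp σ (fun k => (sb α j m k : ℤ) ^ 2)
  have h3 := sb_sq α i m hi
  have h4 := sb_sq α j m hj
  have h5 : (2 * m : ℤ) * α i = 2 * m * α j := by linarith
  have h6 : (2 * m : ℤ) ≠ 0 := by positivity
  have h7 := mul_left_cancel₀ h6 h5
  exact hij (hα (by exact_mod_cast h7))

/-- the class function -/
noncomputable def zf {n : ℕ} (β : Fin n → ℕ) (m : ℕ) (y : Equiv.Perm (Fin n)) : ℤ :=
  (ct y).count m * Psi β ((ct y).erase m)

lemma zf_sum {n : ℕ} (α : Fin n → ℕ) (hα : Function.Injective α) (hdeg : ∑ k, α k = n + TT n)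
    (m : ℕ) (hm : 1 ≤ m) (hmn : m ≤ n) (i : Fin n) (hi : m ≤ α i)
    (hβ : Function.Injective (sb α i m)) :
    m * ∑ y, zf (sb α i m) m y * Psi α (ct y) = (n.factorial : ℤ) := by
  have key : (m : ℚ) * ∑ y : Equiv.Perm (Fin n), (zf (sb α i m) m y : ℚ) * Psi α (ct y) = n.factorial := by
    have h1 : ∀ y : Equiv.Perm (Fin n), (zf (sb α i m) m y : ℚ) * Psi α (ct y) =
        (fun s : Multiset ℕ => (s.count m : ℚ) *
          (fun s => (Psi (sb α i m) s : ℚ) * Psi α (m ::ₘ s)) (s.erase m)) (ct y) := by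
      intro y
      by_cases hy : m ∈ ct y
      · simp only [zf, Multiset.cons_erase hy]
        push_cast
        ring
      · simp [zf, Multiset.count_eq_zero_of_notMem hy]
    rw [sum_congr rfl (fun y _ => h1 y), sum_perm n (fun s : Multiset ℕ => (s.count m : ℚ) *
          (fun s => (Psi (sb α i m) s : ℚ) * Psi α (m ::ₘ s)) (s.erase m)), mul_left_comm,
      ES_count n m hm hmn (fun s => (Psi (sb α i m) s : ℚ) * Psi α (m ::ₘ s))]
    have h2 : ES (n - m) (fun s => (Psi (sb α i m) s : ℚ) * Psi α (m ::ₘ s)) = 1 := by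
      have hs : ∀ j, m ≤ α j → ∑ k, sb α j m k = n - m + TT n := by
        intro j hj
        have := sum_sb α j m hj
        omega
      have h3 : (fun s => (Psi (sb α i m) s : ℚ) * Psi α (m ::ₘ s)) =
          fun s => ∑ j, if m ≤ α j then (Psi (sb α i m) s : ℚ) * Psi (sb α j m) s else 0 := by
        funext s
        rw [Psi_cons]
        push_cast
        rw [mul_sum]
        apply sum_congr rfl
        intro j _
        split_ifs <;> simp
      rw [h3, ES_sum, sum_eq_single i]
      · rw [ES_ite, if_pos hi]
        rw [orthonormal _ _ _ (hs i hi) (hs i hi), DD_self _ hβ]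
      · intro j _ hj
        rw [ES_ite]
        split_ifs with hmj
        · rw [orthonormal _ _ _ (hs i hi) (hs j hmj), DD_sb α hα i j m hm hi hmj hj.symm]
        · rfl
      · simp
    rw [h2, mul_one]
  exact_mod_cast key

lemma zf_conj {n : ℕ} (β : Fin n → ℕ) (m : ℕ) (y h : Equiv.Perm (Fin n)) :
    zf β m (h * y * h⁻¹) = zf β m y := by
  have : ct (h * y * h⁻¹) = ct y := by
    unfold ct
    congr 1
    exact (Equiv.Perm.partition_eq_of_isConj.1 (isConj_iff.2 ⟨h, rfl⟩)).symm
  unfold zf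
  rw [this]

lemma central {n : ℕ} (V : FDRep ℂ (Equiv.Perm (Fin n))) [CategoryTheory.Simple V]
    (hW : Module.finrank ℂ V ≠ 0) (z : Equiv.Perm (Fin n) → ℤ)
    (hz : ∀ y h, z (h * y * h⁻¹) = z y) :
    ∃ ω : ℂ, IsIntegral ℤ ω ∧ ∑ y, (z y : ℂ) * V.character y = ω * Module.finrank ℂ V := by
  classical
  have hnt : Nontrivial V := Module.nontrivial_of_finrank_pos (R := ℂ) (Nat.pos_of_ne_zero hW)
  let φ : MonoidAlgebra ℤ (Equiv.Perm (Fin n)) →ₐ[ℤ] Module.End ℂ V := MonoidAlgebra.lift ℤ _ _ V.ρ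
  let a : MonoidAlgebra ℤ (Equiv.Perm (Fin n)) := ∑ y, MonoidAlgebra.single y (z y)
  have hA : φ a = ∑ y, (z y : ℂ) • V.ρ y := by
    simp only [φ, a, map_sum, MonoidAlgebra.lift_single]
    apply sum_congr rfl
    intro y _
    rw [Int.cast_smul_eq_zsmul]
  have hai : IsIntegral ℤ (φ a) := by
    have : Module.Finite ℤ (MonoidAlgebra ℤ (Equiv.Perm (Fin n))) := by
      infer_instance
    exact (IsIntegral.of_finite ℤ a).map φ
  have hf : Module.finrank ℂ (Representation.linHom V.ρ V.ρ).invariants = 1 := by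
    rw [(Representation.linHom.invariantsEquivFDRepHom V V).finrank_eq, FDRep.finrank_hom_simple_simple]
    simp
  have hAm : φ a ∈ (Representation.linHom V.ρ V.ρ).invariants := by
    rw [Representation.mem_invariants]
    intro h
    rw [Representation.linHom_apply, hA]
    have : ∀ B : Module.End ℂ V, (V.ρ h).comp (B.comp (V.ρ h⁻¹)) = V.ρ h * B * V.ρ h⁻¹ := by
      intro B; rfl
    rw [this, mul_sum, sum_mul]
    rw [← Equiv.sum_comp (MulAut.conj h).toEquiv (fun y => (z y : ℂ) • V.ρ y)]
    apply sum_congr rfl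
    intro y _
    simp only [MulEquiv.toEquiv_eq_coe, MulEquiv.coe_toEquiv, MulAut.conj_apply, hz, map_mul,
      mul_smul_comm, smul_mul_assoc]
  have h1m : (LinearMap.id : V →ₗ[ℂ] V) ∈ (Representation.linHom V.ρ V.ρ).invariants := by
    rw [Representation.mem_invariants]
    intro h
    rw [Representation.linHom_apply, LinearMap.id_comp]
    change V.ρ h * V.ρ h⁻¹ = 1
    rw [← map_mul, mul_inv_cancel, map_one]
  have hne : (⟨LinearMap.id, h1m⟩ : (Representation.linHom V.ρ V.ρ).invariants) ≠ 0 := by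
    intro h
    have h2 : (LinearMap.id : V →ₗ[ℂ] V) = 0 := congrArg Subtype.val h
    obtain ⟨v, hv⟩ := exists_ne (0 : V)
    exact hv (by simpa using LinearMap.congr_fun h2 v)
  obtain ⟨ω, hω⟩ := (finrank_eq_one_iff_of_nonzero' _ hne).1 hf ⟨φ a, hAm⟩
  have hω2 : ω • (LinearMap.id : V →ₗ[ℂ] V) = φ a := congrArg Subtype.val hω
  refine ⟨ω, ?_, ?_⟩
  · have h3 : φ a = algebraMap ℂ (Module.End ℂ V) ω := by
      rw [← hω2, Algebra.algebraMap_eq_smul_one]; rfl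
    rw [h3] at hai
    exact (isIntegral_algebraMap_iff (FaithfulSMul.algebraMap_injective ℂ (Module.End ℂ V))).1 hai
  · have := congrArg (LinearMap.trace ℂ V) (hω2.trans hA)
    rw [map_smul, map_sum, LinearMap.trace_id] at this
    simp only [smul_eq_mul, map_smul] at this
    exact this.symm

lemma part_dvd {n : ℕ} (V : FDRep ℂ (Equiv.Perm (Fin n))) [CategoryTheory.Simple V]
    (g : Equiv.Perm (Fin n)) (hg : V.character g ≠ 0) (m : ℕ) (hm : m ∈ ct g) :
    m * Module.finrank ℂ V ∣ n.factorial := by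
  have hW : Module.finrank ℂ V ≠ 0 := by
    intro h
    apply hg
    have := Module.finrank_zero_iff.1 h
    unfold FDRep.character
    rw [Subsingleton.elim (V.ρ g) 0, map_zero]
  have h0 : (Nat.card (Equiv.Perm (Fin n)) : ℂ) ≠ 0 := by
    exact_mod_cast Nat.card_pos.ne'
  have ho : ∑ g, Representation.character V.ρ g * Representation.character V.ρ g⁻¹ = (n.factorial : ℂ) := by
    classical
    let _ : Invertible (Nat.card (Equiv.Perm (Fin n)) : ℂ) := invertibleOfNonzero h0
    have := FDRep.char_orthonormal V V
    rw [if_pos ⟨CategoryTheory.Iso.refl V⟩, inv_mul_eq_iff_eq_mul₀ h0] at this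
    rw [show (n.factorial : ℂ) = Nat.card (Equiv.Perm (Fin n)) * 1 by simp [Fintype.card_perm], ← this]
    rfl
  obtain ⟨α, ε, hε, hα, hdeg, hχ⟩ := char_eq V.ρ hW ho
  have hgP : Psi α (ct g) ≠ 0 := by
    intro h
    apply hg
    have : V.character g = ε * ((Psi α (ct g) : ℤ) : ℂ) := hχ g
    rw [h] at this
    simpa using this
  have hm1 : 1 ≤ m := ct_pos g hm
  have hmn : m ≤ n := by
    have := Multiset.le_sum_of_mem hm
    rwa [ct_sum] at this
  rw [← Multiset.cons_erase hm, Psi_cons] at hgP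
  obtain ⟨i, _, hi⟩ := exists_ne_zero_of_sum_ne_zero hgP
  split_ifs at hi with hmi
  swap
  · exact absurd rfl hi
  have hβ := Psi_inj _ _ (fun j hj => ct_pos g (Multiset.mem_of_mem_erase hj)) hi
  have hS := zf_sum α hα hdeg m hm1 hmn i hmi hβ
  obtain ⟨ω, hωi, hω⟩ := central V hW (zf (sb α i m) m) (fun y h => zf_conj _ m y h)
  have hS2 : (m : ℂ) * ∑ y, (zf (sb α i m) m y : ℂ) * V.character y = ε * n.factorial := by
    have h1 : ∀ y, (zf (sb α i m) m y : ℂ) * V.character y =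
        ε * ((zf (sb α i m) m y * Psi α (ct y) : ℤ) : ℂ) := by
      intro y
      have : V.character y = ε * ((Psi α (ct y) : ℤ) : ℂ) := hχ y
      rw [this]; push_cast; ring
    rw [sum_congr rfl (fun y _ => h1 y), ← mul_sum, mul_left_comm]
    congr 1
    exact_mod_cast congrArg (Int.cast (R := ℂ)) hS
  rw [hω] at hS2
  have hmd : ((m * Module.finrank ℂ V : ℕ) : ℂ) ≠ 0 := by
    exact_mod_cast mul_ne_zero (by omega) hW
  have hq : ω = algebraMap ℚ ℂ ((ε * n.factorial : ℤ) / (m * Module.finrank ℂ V : ℕ)) := by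
    rw [map_div₀]
    simp only [eq_ratCast, Rat.cast_intCast, Rat.cast_natCast]
    rw [eq_div_iff hmd]
    push_cast
    rw [← hS2]; ring
  rw [hq] at hωi
  have hi2 : IsIntegral ℤ (((ε * n.factorial : ℤ) : ℚ) / (m * Module.finrank ℂ V : ℕ)) :=
    (isIntegral_algebraMap_iff (algebraMap ℚ ℂ).injective).1 hωi
  obtain ⟨w, hw⟩ := IsIntegrallyClosed.isIntegral_iff.1 hi2
  have hmd2 : ((m * Module.finrank ℂ V : ℕ) : ℚ) ≠ 0 := by exact_mod_cast hmd
  rw [eq_div_iff hmd2, eq_intCast] at hw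
  have hw2 : w * ((m * Module.finrank ℂ V : ℕ) : ℤ) = ε * n.factorial := by
    exact_mod_cast hw
  have hd : ((m * Module.finrank ℂ V : ℕ) : ℤ) ∣ (n.factorial : ℤ) := by
    refine ⟨ε * w, ?_⟩
    calc (n.factorial : ℤ) = ε * ε * n.factorial := by rw [hε, one_mul]
      _ = ε * (ε * n.factorial) := by ring
      _ = _ := by rw [← hw2]; ring
  exact_mod_cast hd

end SymChar

theorem orderOf_mul_degree_dvd_card_of_char_ne_zero_symmetricGroup
    (n : ℕ) (hn : 1 ≤ n)
    (V : FDRep ℂ (Equiv.Perm (Fin n))) (hV : CategoryTheory.Simple V)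
    (g : Equiv.Perm (Fin n)) (hg : V.character g ≠ 0) :
    orderOf g * Module.finrank ℂ V ∣ Nat.factorial n := by
  have hp := fun m hm => SymChar.part_dvd V g hg m hm
  obtain ⟨m0, hm0⟩ : ∃ m, m ∈ SymChar.ct g := by
    apply Multiset.exists_mem_of_ne_zero
    intro h
    have := SymChar.ct_sum g
    rw [h] at this
    simp at this
    omega
  have hd : Module.finrank ℂ V ∣ n.factorial := (Dvd.intro_left _ rfl).trans (hp m0 hm0)
  have hd0 : 0 < Module.finrank ℂ V := Nat.pos_of_dvd_of_pos hd n.factorial_pos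
  obtain ⟨q, hq⟩ := hd
  rw [hq, mul_comm]
  apply mul_dvd_mul_left
  rw [← Equiv.Perm.lcm_cycleType]
  apply Multiset.lcm_dvd.2
  intro m hm
  have h1 := hp m (by
    unfold SymChar.ct
    rw [Equiv.Perm.parts_partition]
    exact Multiset.mem_add.2 (Or.inl hm))
  rw [hq, mul_comm] at h1
  exact Nat.dvd_of_mul_dvd_mul_left hd0 h1
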